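/- arXiv:2311.00820 — 3 statements merged into one kernel-verified Lean document; each statement's English description precedes it below -/
import Mathlib

section
/- Let V : ℝ → ℝ be continuous with V(t) > 0 for all t, and let m : ℝ → ℝ be differentiable and satisfy the canonical-link identity m′(s) = V(m(s)) for all s ∈ ℝ. Let x₁, …, x_n ∈ ℝᵖ, a ∈ ℝ, ψ > 0, β₀ ∈ ℝᵖ, and suppose the matrix with rows x₁ᵀ, …, x_nᵀ has rank p. Define L(β) = Σ_{i=1}^n ∫_a^{m(x_iᵀβ)} ( m(x_iᵀβ₀) − t )/(ψ·V(t)) dt. Then L is strictly concave on ℝᵖ and β₀ is its unique global maximizer. -/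
open scoped RealInnerProductSpace

/-!
Since `m′ = V ∘ m`, the chain rule cancels the variance function: as a function of the linear
predictor `s`, the quasi-log-likelihood of an observation `y` has derivative `(y - m s) / ψ`. As `m`
is strictly increasing, this derivative is strictly decreasing, and it vanishes at `c` when
`y = m c`. Each observation therefore contributes a strictly concave function of its own linear
predictor, maximal at that of `β₀`. Full column rank makes `β ↦ (xᵢᵀβ)ᵢ` injective, so that the sum
is still strictly concave in `β`, and its maximizer `β₀` is unique.
-/

open Set

section StrictConcave

variable {𝕜 β : Type*} [Semiring 𝕜] [PartialOrder 𝕜] [AddCommMonoid β] [PartialOrder β]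
  [Module 𝕜 β]

theorem strictConcaveOn_comp_linearMap {E F : Type*} [AddCommMonoid E] [AddCommMonoid F]
    [Module 𝕜 E] [Module 𝕜 F] {s : Set F} {f : F → β} (hf : StrictConcaveOn 𝕜 s f)
    {g : E →ₗ[𝕜] F} (hg : Function.Injective g) : StrictConcaveOn 𝕜 (g ⁻¹' s) (f ∘ g) := by
  refine ⟨hf.1.linear_preimage g, fun v hv w hw hvw a b ha hb hab => ?_⟩
  simpa only [Function.comp_apply, map_add, map_smul] using hf.2 hv hw (hg.ne hvw) ha hb hab

theorem strictConcaveOn_sum_pi [IsOrderedCancelAddMonoid β] {ι : Type*} [Fintype ι] {E : ι → Type*}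
    [∀ i, AddCommMonoid (E i)] [∀ i, Module 𝕜 (E i)] {s : ∀ i, Set (E i)} {f : ∀ i, E i → β}
    (hf : ∀ i, StrictConcaveOn 𝕜 (s i) (f i)) :
    StrictConcaveOn 𝕜 (univ.pi s) fun z => ∑ i, f i (z i) := by
  refine ⟨convex_pi fun i _ => (hf i).1, fun z hz w hw hzw a b ha hb hab => ?_⟩
  rw [mem_univ_pi] at hz hw
  obtain ⟨k, hk⟩ := Function.ne_iff.1 hzw
  simp only [Finset.smul_sum, ← Finset.sum_add_distrib]
  exact Finset.sum_lt_sum (fun i _ => (hf i).concaveOn.2 (hz i) (hw i) ha.le hb.le hab)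
    ⟨k, Finset.mem_univ k, (hf k).2 (hz k) (hw k) hk ha hb hab⟩

end StrictConcave

theorem lt_of_strictConcaveOn_of_isMaxOn {𝕜 E β : Type*} [Field 𝕜] [LinearOrder 𝕜]
    [IsStrictOrderedRing 𝕜] [AddCommMonoid E] [SMul 𝕜 E] [AddCommMonoid β] [PartialOrder β]
    [IsOrderedAddMonoid β] [Module 𝕜 β] [PosSMulMono 𝕜 β] {s : Set E} {f : E → β} {v w : E}
    (hf : StrictConcaveOn 𝕜 s f) (hmax : IsMaxOn f s w) (hv : v ∈ s) (hw : w ∈ s) (hvw : v ≠ w) :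
    f v < f w :=
  (hmax hv).lt_of_ne fun heq =>
    hvw (hf.eq_of_isMaxOn (fun _ hu => (hmax hu).trans_eq heq.symm) hmax hv hw)

theorem isMaxOn_of_concaveOn_of_hasDerivAt_zero {s : Set ℝ} {f : ℝ → ℝ} {c : ℝ}
    (hf : ConcaveOn ℝ s f) (hc : c ∈ interior s) (hderiv : HasDerivAt f 0 c) : IsMaxOn f s c := by
  have hright : derivWithin (-f) (Ioi c) c = 0 := by
    simpa using hderiv.neg.hasDerivWithinAt.derivWithin (uniqueDiffWithinAt_Ioi c)
  simpa using (hf.neg.isMinOn_of_rightDeriv_eq_zero hc hright).neg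

section LinearPredictor

theorem rank_eq_card_iff_mulVec_injective {K ι κ : Type*} [Field K] [Fintype κ]
    (A : Matrix ι κ K) : A.rank = Fintype.card κ ↔ Function.Injective A.mulVec := by
  rw [Matrix.mulVec_injective_iff, linearIndependent_iff_card_eq_finrank_span,
    Matrix.rank_eq_finrank_span_cols, Set.finrank, eq_comm]

/-- The linear predictor `β ↦ (⟪xᵢ, β⟫)ᵢ` of a generalized linear model with covariate vectors
`xᵢ`; for Euclidean covariates it is multiplication by the design matrix with rows `xᵢᵀ`. -/
noncomputable def linearPredictor {ι E : Type*} [SeminormedAddCommGroup E] [InnerProductSpace ℝ E]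
    (x : ι → E) : E →ₗ[ℝ] ι → ℝ :=
  LinearMap.pi fun i => innerₛₗ ℝ (x i)

theorem linearPredictor_eq_mulVec {ι κ : Type*} [Fintype κ] (x : ι → EuclideanSpace ℝ κ)
    (β : EuclideanSpace ℝ κ) :
    linearPredictor x β = (Matrix.of fun i j => x i j).mulVec β.ofLp := by
  ext i
  simp [linearPredictor, PiLp.inner_apply, Matrix.mulVec, dotProduct, mul_comm]

theorem linearPredictor_injective_iff_rank_eq_card {ι κ : Type*} [Fintype κ]
    (x : ι → EuclideanSpace ℝ κ) : Function.Injective (linearPredictor x) ↔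
      (Matrix.of fun i j => x i j).rank = Fintype.card κ := by
  have hcomp : ⇑(linearPredictor x) =
      (Matrix.of fun i j => x i j).mulVec ∘ (WithLp.equiv 2 (κ → ℝ)) :=
    funext (linearPredictor_eq_mulVec x)
  rw [hcomp, Equiv.injective_comp, rank_eq_card_iff_mulVec_injective]

end LinearPredictor

section QuasiLogLikelihood

/-- The quasi-log-likelihood `Q(μ; y)` of a mean `μ` given one observation `y`, for the variance
function `V` and the dispersion `ψ`, normalized to vanish at `μ = a`. -/
noncomputable def quasiLogLikelihood (V : ℝ → ℝ) (ψ a y μ : ℝ) : ℝ :=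
  ∫ t in a..μ, (y - t) / (ψ * V t)

variable {M : Set ℝ} {V m : ℝ → ℝ} {ψ a : ℝ}

theorem hasDerivAt_quasiLogLikelihood (hM : IsOpen M) (hMconn : M.OrdConnected)
    (hVcont : ContinuousOn V M) (hV : ∀ t ∈ M, V t ≠ 0) (hψ : ψ ≠ 0) (ha : a ∈ M) (y : ℝ) {μ : ℝ}
    (hμ : μ ∈ M) : HasDerivAt (quasiLogLikelihood V ψ a y) ((y - μ) / (ψ * V μ)) μ := by
  have hcont : ContinuousOn (fun t => (y - t) / (ψ * V t)) M :=
    (continuousOn_const.sub continuousOn_id).div (continuousOn_const.mul hVcont)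
      fun t ht => mul_ne_zero hψ (hV t ht)
  exact intervalIntegral.integral_hasDerivAt_right
    (hcont.mono (hMconn.uIcc_subset ha hμ)).intervalIntegrable
    (hcont.stronglyMeasurableAtFilter hM μ hμ) (hcont.continuousAt (hM.mem_nhds hμ))

theorem hasDerivAt_quasiLogLikelihood_comp (hM : IsOpen M) (hMconn : M.OrdConnected)
    (hVcont : ContinuousOn V M) (hV : ∀ t ∈ M, V t ≠ 0) (hψ : ψ ≠ 0) (ha : a ∈ M) (y : ℝ) {s : ℝ}
    (hs : m s ∈ M) (hm : HasDerivAt m (V (m s)) s) :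
    HasDerivAt (fun u => quasiLogLikelihood V ψ a y (m u)) ((y - m s) / ψ) s := by
  have hVs := hV (m s) hs
  have hcancel : (y - m s) / (ψ * V (m s)) * V (m s) = (y - m s) / ψ := by field_simp
  exact hcancel ▸ (hasDerivAt_quasiLogLikelihood hM hMconn hVcont hV hψ ha y hs).comp s hm

theorem strictConcaveOn_quasiLogLikelihood_comp (hM : IsOpen M) (hMconn : M.OrdConnected)
    (hVcont : ContinuousOn V M) (hVpos : ∀ t ∈ M, 0 < V t) (hψ : 0 < ψ) (ha : a ∈ M) (y : ℝ)
    (hmM : ∀ s, m s ∈ M) (hm : ∀ s, HasDerivAt m (V (m s)) s) :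
    StrictConcaveOn ℝ univ fun s => quasiLogLikelihood V ψ a y (m s) := by
  have hderiv (s : ℝ) := hasDerivAt_quasiLogLikelihood_comp hM hMconn hVcont
    (fun t ht => (hVpos t ht).ne') hψ.ne' ha y (hmM s) (hm s)
  have hmono : StrictMono m := strictMono_of_hasDerivAt_pos hm fun s => hVpos _ (hmM s)
  refine StrictAnti.strictConcaveOn_univ_of_deriv
    (continuous_iff_continuousAt.2 fun s => (hderiv s).continuousAt) fun s t hst => ?_
  rw [(hderiv s).deriv, (hderiv t).deriv]
  exact div_lt_div_of_pos_right (sub_lt_sub_left (hmono hst) y) hψ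

theorem isMaxOn_quasiLogLikelihood_comp (hM : IsOpen M) (hMconn : M.OrdConnected)
    (hVcont : ContinuousOn V M) (hVpos : ∀ t ∈ M, 0 < V t) (hψ : 0 < ψ) (ha : a ∈ M)
    (hmM : ∀ s, m s ∈ M) (hm : ∀ s, HasDerivAt m (V (m s)) s) (c : ℝ) :
    IsMaxOn (fun s => quasiLogLikelihood V ψ a (m c) (m s)) univ c := by
  refine isMaxOn_of_concaveOn_of_hasDerivAt_zero
    (strictConcaveOn_quasiLogLikelihood_comp hM hMconn hVcont hVpos hψ ha (m c) hmM hm).concaveOn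
    (by simp) ?_
  simpa using hasDerivAt_quasiLogLikelihood_comp hM hMconn hVcont
    (fun t ht => (hVpos t ht).ne') hψ.ne' ha (m c) (hmM c) (hm c)

/-- `M` is the space of admissible means, such as `(0, ∞)` for the Poisson model (`V t = t`,
`m = exp`) or `(0, 1)` for the Bernoulli model (`V t = t * (1 - t)`, `m` the logistic function). -/
theorem integrated_quasi_likelihood_unique_max_general {ι E : Type*} [Fintype ι] [AddCommGroup E]
    [Module ℝ E] (hM : IsOpen M) (hMconn : M.OrdConnected) (hVcont : ContinuousOn V M)
    (hVpos : ∀ t ∈ M, 0 < V t) (hmM : ∀ s, m s ∈ M) (hm : ∀ s, HasDerivAt m (V (m s)) s)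
    (ha : a ∈ M) (hψ : 0 < ψ) {η : E →ₗ[ℝ] ι → ℝ} (hη : Function.Injective η) (β₀ : E) :
    StrictConcaveOn ℝ univ (fun β => ∑ i, quasiLogLikelihood V ψ a (m (η β₀ i)) (m (η β i))) ∧
    ∀ β, β ≠ β₀ → ∑ i, quasiLogLikelihood V ψ a (m (η β₀ i)) (m (η β i))
      < ∑ i, quasiLogLikelihood V ψ a (m (η β₀ i)) (m (η β₀ i)) := by
  have hconc : StrictConcaveOn ℝ univ
      (fun β => ∑ i, quasiLogLikelihood V ψ a (m (η β₀ i)) (m (η β i))) := by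
    simpa using! strictConcaveOn_comp_linearMap (strictConcaveOn_sum_pi fun i =>
      strictConcaveOn_quasiLogLikelihood_comp hM hMconn hVcont hVpos hψ ha (m (η β₀ i)) hmM hm) hη
  have hmax : IsMaxOn (fun β => ∑ i, quasiLogLikelihood V ψ a (m (η β₀ i)) (m (η β i))) univ β₀ :=
    isMaxOn_univ_iff.2 fun β => Finset.sum_le_sum fun i _ =>
      isMaxOn_quasiLogLikelihood_comp hM hMconn hVcont hVpos hψ ha hmM hm (η β₀ i)
        (mem_univ (η β i))
  exact ⟨hconc, fun β hβ =>
    (lt_of_strictConcaveOn_of_isMaxOn hconc hmax (mem_univ β) (mem_univ β₀) hβ :)⟩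

end QuasiLogLikelihood

/-- Uniqueness case of Theorem 1 of the paper (canonical link, `m′ = V ∘ m`): under
full column rank of the design matrix, the integrated quasi-log-likelihood
`L(β) = Σᵢ ∫_a^{m(xᵢᵀβ)} (m(xᵢᵀβ₀) − t)/(ψ V(t)) dt` is strictly concave on `ℝᵖ`
and `β₀` is its unique global maximizer. -/
theorem integrated_quasi_likelihood_unique_max {n p : ℕ}
    (V : ℝ → ℝ) (hVcont : Continuous V) (hVpos : ∀ t, 0 < V t)
    (m : ℝ → ℝ) (hm : Differentiable ℝ m)
    (hcanon : ∀ s, deriv m s = V (m s))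
    (x : Fin n → EuclideanSpace ℝ (Fin p)) (a : ℝ) (ψ : ℝ) (hψ : 0 < ψ)
    (β₀ : EuclideanSpace ℝ (Fin p))
    (hrank : (Matrix.of fun (i : Fin n) (j : Fin p) => x i j).rank = p) :
    StrictConcaveOn ℝ Set.univ
      (fun β : EuclideanSpace ℝ (Fin p) =>
        ∑ i, ∫ t in a..(m ⟪x i, β⟫), (m ⟪x i, β₀⟫ - t) / (ψ * V t)) ∧
    ∀ β : EuclideanSpace ℝ (Fin p), β ≠ β₀ →
      (∑ i, ∫ t in a..(m ⟪x i, β⟫), (m ⟪x i, β₀⟫ - t) / (ψ * V t))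
        < ∑ i, ∫ t in a..(m ⟪x i, β₀⟫), (m ⟪x i, β₀⟫ - t) / (ψ * V t) :=
  integrated_quasi_likelihood_unique_max_general isOpen_univ ordConnected_univ hVcont.continuousOn
    (fun t _ => hVpos t) (fun _ => mem_univ _) (fun s => hcanon s ▸ (hm s).hasDerivAt)
    (mem_univ a) hψ ((linearPredictor_injective_iff_rank_eq_card x).2 (by simpa using hrank)) β₀
end

section
/- Let M ⊆ ℝ be an open interval, V : M → ℝ continuous with V(μ) > 0 for all μ ∈ M, θ : M → ℝ differentiable with θ′(μ) = 1/V(μ) for all μ ∈ M, and b : ℝ → ℝ differentiable on θ(M) with b′(θ(μ)) = μ for all μ ∈ M. Then for every y ∈ ℝ and every a, μ ∈ M: ∫_a^μ (y − t)/V(t) dt = ( y·θ(μ) − b(θ(μ)) ) − ( y·θ(a) − b(θ(a)) ). -/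
/-!
Since `θ' = 1 / V` and `b' (θ t) = t`, the chain rule shows that the score
`d/dt (y * θ t - b (θ t))` is the quasi-score `(y - t) / V t`, so the identity is the fundamental
theorem of calculus. Integrability comes for free: by Darboux's theorem the nonvanishing
derivative `1 / V` has constant sign, and a derivative of constant sign is integrable.
-/

open Set MeasureTheory
open scoped Interval

/-- The log-likelihood `y * θ μ - b (θ μ)` of the mean `μ` at the observation `y`, for the
exponential family with natural parameter `θ` and cumulant function `b`. The term `log (h y)`,
which does not depend on `μ`, is left out. -/
def expFamilyLogLik {R : Type*} [Ring R] (θ b : R → R) (y μ : R) : R :=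
  y * θ μ - b (θ μ)

theorem hasDerivWithinAt_expFamilyLogLik {𝕜 : Type*} [NontriviallyNormedField 𝕜]
    {θ b : 𝕜 → 𝕜} {s : Set 𝕜} {x θ' b' : 𝕜} (hθ : HasDerivWithinAt θ θ' s x)
    (hb : HasDerivWithinAt b b' (θ '' s) (θ x)) (y : 𝕜) :
    HasDerivWithinAt (expFamilyLogLik θ b y) ((y - b') * θ') s x := by
  rw [sub_mul]
  exact (hθ.const_mul y).sub (hb.comp x hθ (mapsTo_image θ s))

theorem hasDerivAt_of_hasDerivWithinAt_uIcc {E : Type*} [NormedAddCommGroup E] [NormedSpace ℝ E]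
    {f : ℝ → E} {f' : E} {a b x : ℝ} (hf : HasDerivWithinAt f f' [[a, b]] x)
    (hx : x ∈ uIoo a b) : HasDerivAt f f' x :=
  hf.hasDerivAt (Icc_mem_nhds hx.1 hx.2)

theorem integral_eq_sub_of_hasDerivWithinAt {E : Type*} [NormedAddCommGroup E] [NormedSpace ℝ E]
    [CompleteSpace E] {f f' : ℝ → E} {a b : ℝ}
    (hf : ∀ x ∈ [[a, b]], HasDerivWithinAt f (f' x) [[a, b]] x)
    (hint : IntervalIntegrable f' volume a b) : ∫ x in a..b, f' x = f b - f a :=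
  intervalIntegral.integral_eq_sub_of_hasDeriv_right
    (fun x hx ↦ (hf x hx).continuousWithinAt)
    (fun x hx ↦ (hasDerivAt_of_hasDerivWithinAt_uIcc
      (hf x (uIoo_subset_uIcc_self hx)) hx).hasDerivWithinAt)
    hint

theorem intervalIntegrable_of_hasDerivWithinAt_of_nonneg {f f' : ℝ → ℝ} {a b : ℝ}
    (hf : ∀ x ∈ [[a, b]], HasDerivWithinAt f (f' x) [[a, b]] x)
    (hf' : ∀ x ∈ uIoo a b, 0 ≤ f' x) : IntervalIntegrable f' volume a b :=
  intervalIntegral.intervalIntegrable_deriv_of_nonneg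
    (fun x hx ↦ (hf x hx).continuousWithinAt)
    (fun x hx ↦ hasDerivAt_of_hasDerivWithinAt_uIcc (hf x (uIoo_subset_uIcc_self hx)) hx) hf'

theorem intervalIntegrable_of_hasDerivWithinAt_of_ne_zero {f f' : ℝ → ℝ} {a b : ℝ}
    (hf : ∀ x ∈ [[a, b]], HasDerivWithinAt f (f' x) [[a, b]] x)
    (hf' : ∀ x ∈ [[a, b]], f' x ≠ 0) : IntervalIntegrable f' volume a b := by
  rcases hasDerivWithinAt_forall_lt_or_forall_gt_of_forall_ne (convex_uIcc a b) hf hf' with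
    hneg | hpos
  · have hint : IntervalIntegrable (-f') volume a b :=
      intervalIntegrable_of_hasDerivWithinAt_of_nonneg (fun x hx ↦ (hf x hx).neg)
        fun x hx ↦ neg_nonneg.2 (hneg x (uIoo_subset_uIcc_self hx)).le
    simpa only [neg_neg] using hint.neg
  · exact intervalIntegrable_of_hasDerivWithinAt_of_nonneg hf
      fun x hx ↦ (hpos x (uIoo_subset_uIcc_self hx)).le

theorem integral_sub_mul_eq_expFamilyLogLik_sub {θ θ' b : ℝ → ℝ} {a μ : ℝ}
    (hθ : ∀ t ∈ [[a, μ]], HasDerivWithinAt θ (θ' t) [[a, μ]] t)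
    (hb : ∀ t ∈ [[a, μ]], HasDerivWithinAt b t (θ '' [[a, μ]]) (θ t))
    (hint : IntervalIntegrable θ' volume a μ) (y : ℝ) :
    ∫ t in a..μ, (y - t) * θ' t = expFamilyLogLik θ b y μ - expFamilyLogLik θ b y a :=
  integral_eq_sub_of_hasDerivWithinAt
    (fun t ht ↦ hasDerivWithinAt_expFamilyLogLik (hθ t ht) (hb t ht) y)
    (hint.continuousOn_mul (by fun_prop))

theorem wedderburn_if_general {M : Set ℝ} (hM : M.OrdConnected) {V θ b : ℝ → ℝ}
    (hV : ∀ μ ∈ M, V μ ≠ 0) (hθ : ∀ μ ∈ M, HasDerivWithinAt θ (1 / V μ) M μ)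
    (hb : ∀ μ ∈ M, HasDerivWithinAt b μ (θ '' M) (θ μ)) (y : ℝ) {a μ : ℝ} (ha : a ∈ M)
    (hμ : μ ∈ M) :
    ∫ t in a..μ, (y - t) / V t = expFamilyLogLik θ b y μ - expFamilyLogLik θ b y a := by
  have hsub : [[a, μ]] ⊆ M := hM.uIcc_subset ha hμ
  have hθ' : ∀ t ∈ [[a, μ]], HasDerivWithinAt θ (1 / V t) [[a, μ]] t :=
    fun t ht ↦ (hθ t (hsub ht)).mono hsub
  have hb' : ∀ t ∈ [[a, μ]], HasDerivWithinAt b t (θ '' [[a, μ]]) (θ t) :=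
    fun t ht ↦ (hb t (hsub ht)).mono (image_mono hsub)
  have hint : IntervalIntegrable (fun t ↦ 1 / V t) volume a μ :=
    intervalIntegrable_of_hasDerivWithinAt_of_ne_zero hθ'
      fun t ht ↦ one_div_ne_zero (hV t (hsub ht))
  simpa only [mul_one_div] using integral_sub_mul_eq_expFamilyLogLik_sub hθ' hb' hint y

/-- The 'if' direction of Wedderburn's theorem (Theorem 2 of the paper): on an open
interval `M`, with `V` continuous and positive, `θ` the natural parametrization
(`θ′ = 1/V`) and `b` the cumulant function (`b′(θ(μ)) = μ`), the log-quasi-likelihood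
coincides with the genuine exponential-family log-likelihood up to a constant:
`∫_a^μ (y − t)/V(t) dt = (y θ(μ) − b(θ(μ))) − (y θ(a) − b(θ(a)))`. -/
theorem wedderburn_if (M : Set ℝ) (hMopen : IsOpen M) (hMconn : M.OrdConnected)
    (V : ℝ → ℝ) (hVcont : ContinuousOn V M) (hVpos : ∀ μ ∈ M, 0 < V μ)
    (θ : ℝ → ℝ) (hθ : ∀ μ ∈ M, HasDerivAt θ (1 / V μ) μ)
    (b : ℝ → ℝ) (hb : ∀ μ ∈ M, HasDerivAt b μ (θ μ)) :
    ∀ (y : ℝ), ∀ a ∈ M, ∀ μ ∈ M,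
      ∫ t in a..μ, (y - t) / V t
        = (y * θ μ - b (θ μ)) - (y * θ a - b (θ a)) := by
  intro y a ha μ hμ
  exact wedderburn_if_general hMconn (fun t ht ↦ (hVpos t ht).ne')
    (fun t ht ↦ (hθ t ht).hasDerivWithinAt) (fun t ht ↦ (hb t ht).hasDerivWithinAt) y ha hμ
end

section
/- Let M ⊆ ℝ be an open interval, V : M → ℝ continuous with V(μ) > 0 for all μ ∈ M, and let f : ℝ × M → ℝ be strictly positive such that, for each y ∈ ℝ, the map μ ↦ log f(y, μ) is differentiable on M with derivative (y − μ)/V(μ). Fix a ∈ M and define θ(μ) = ∫_a^μ 1/V(t) dt and B(μ) = ∫_a^μ t/V(t) dt. Then for all y ∈ ℝ and all μ ∈ M: f(y, μ) = f(y, a) · exp( y·θ(μ) − B(μ) ). -/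
/-!
Integrating the score from `a` to `μ` gives
`log f(y, μ) - log f(y, a) = ∫_a^μ (y - t)/V(t) dt`, and the right-hand side splits as
`y θ(μ) - B(μ)` as soon as `1/V` is integrable. For the integrability, subtract the scores at two
points `u ≠ v`: their difference is `(u - v)/V`, so `1/V` is itself a derivative. It has no zero, so
by Darboux's theorem it has constant sign, and a derivative of constant sign is integrable.
-/

open MeasureTheory Set

section IntervalDerivative

variable {E : Type*} [NormedAddCommGroup E] [NormedSpace ℝ E] {a b : ℝ}

theorem hasDerivAt_of_hasDerivWithinAt_uIcc_s6 {F : ℝ → E} {F' : E} {x : ℝ}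
    (hF : HasDerivWithinAt F F' (uIcc a b) x) (hx : x ∈ Ioo (min a b) (max a b)) :
    HasDerivAt F F' x :=
  hF.hasDerivAt (Icc_mem_nhds hx.1 hx.2)

theorem integral_eq_sub_of_hasDerivWithinAt_uIcc [CompleteSpace E] {F F' : ℝ → E}
    (hF : ∀ x ∈ uIcc a b, HasDerivWithinAt F (F' x) (uIcc a b) x)
    (hint : IntervalIntegrable F' volume a b) :
    ∫ x in a..b, F' x = F b - F a :=
  intervalIntegral.integral_eq_sub_of_hasDeriv_right (HasDerivWithinAt.continuousOn hF)
    (fun x hx =>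
      (hasDerivAt_of_hasDerivWithinAt_uIcc_s6 (hF x (Ioo_subset_Icc_self hx)) hx).hasDerivWithinAt)
    hint

theorem intervalIntegrable_of_hasDerivWithinAt_of_nonneg_s6 {g g' : ℝ → ℝ}
    (hg : ∀ x ∈ uIcc a b, HasDerivWithinAt g (g' x) (uIcc a b) x)
    (hg' : ∀ x ∈ uIcc a b, 0 ≤ g' x) :
    IntervalIntegrable g' volume a b :=
  intervalIntegral.intervalIntegrable_deriv_of_nonneg (HasDerivWithinAt.continuousOn hg)
    (fun x hx => hasDerivAt_of_hasDerivWithinAt_uIcc_s6 (hg x (Ioo_subset_Icc_self hx)) hx)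
    (fun x hx => hg' x (Ioo_subset_Icc_self hx))

theorem intervalIntegrable_of_hasDerivWithinAt_of_ne_zero_s6 {g g' : ℝ → ℝ}
    (hg : ∀ x ∈ uIcc a b, HasDerivWithinAt g (g' x) (uIcc a b) x)
    (hg' : ∀ x ∈ uIcc a b, g' x ≠ 0) :
    IntervalIntegrable g' volume a b := by
  rcases hasDerivWithinAt_forall_lt_or_forall_gt_of_forall_ne (convex_uIcc a b) hg hg'
    with hneg | hpos
  · have hint : IntervalIntegrable (fun x => -g' x) volume a b :=
      intervalIntegrable_of_hasDerivWithinAt_of_nonneg_s6 (fun x hx => (hg x hx).neg)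
        (fun x hx => neg_nonneg.mpr (hneg x hx).le)
    simpa only [Pi.neg_def, neg_neg] using hint.neg
  · exact intervalIntegrable_of_hasDerivWithinAt_of_nonneg_s6 hg (fun x hx => (hpos x hx).le)

theorem eq_mul_exp_integral_of_hasDerivWithinAt_log {g s : ℝ → ℝ} (ha : 0 < g a) (hb : 0 < g b)
    (hg : ∀ x ∈ uIcc a b, HasDerivWithinAt (fun t => Real.log (g t)) (s x) (uIcc a b) x)
    (hs : IntervalIntegrable s volume a b) :
    g b = g a * Real.exp (∫ x in a..b, s x) := by
  rw [integral_eq_sub_of_hasDerivWithinAt_uIcc hg hs, Real.exp_sub, Real.exp_log ha,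
    Real.exp_log hb, mul_div_cancel₀ _ ha.ne']

end IntervalDerivative

section LinearScore

variable {V : ℝ → ℝ} {a b : ℝ}

theorem hasDerivWithinAt_one_div_of_sub_div {g h : ℝ → ℝ} {S : Set ℝ} {u v w x : ℝ} (huv : u ≠ v)
    (hg : HasDerivWithinAt g ((u - x) / w) S x) (hh : HasDerivWithinAt h ((v - x) / w) S x) :
    HasDerivWithinAt (fun t => (g t - h t) / (u - v)) (1 / w) S x := by
  have hquot : ((u - x) / w - (v - x) / w) / (u - v) = 1 / w := by
    rw [← sub_div, sub_sub_sub_cancel_right, div_right_comm, div_self (sub_ne_zero.mpr huv)]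
  exact hquot ▸ (hg.sub hh).div_const (u - v)

theorem intervalIntegrable_one_div_of_hasDerivWithinAt_sub_div {g h : ℝ → ℝ} {u v : ℝ}
    (huv : u ≠ v) (hV : ∀ x ∈ uIcc a b, V x ≠ 0)
    (hg : ∀ x ∈ uIcc a b, HasDerivWithinAt g ((u - x) / V x) (uIcc a b) x)
    (hh : ∀ x ∈ uIcc a b, HasDerivWithinAt h ((v - x) / V x) (uIcc a b) x) :
    IntervalIntegrable (fun x => 1 / V x) volume a b :=
  intervalIntegrable_of_hasDerivWithinAt_of_ne_zero_s6
    (fun x hx => hasDerivWithinAt_one_div_of_sub_div huv (hg x hx) (hh x hx))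
    (fun x hx => one_div_ne_zero (hV x hx))

theorem intervalIntegrable_div_of_one_div {φ : ℝ → ℝ}
    (hV : IntervalIntegrable (fun x => 1 / V x) volume a b) (hφ : ContinuousOn φ (uIcc a b)) :
    IntervalIntegrable (fun x => φ x / V x) volume a b := by
  simpa only [mul_one_div] using hV.continuousOn_mul hφ

theorem integral_sub_div_eq (hV : IntervalIntegrable (fun x => 1 / V x) volume a b) (y : ℝ) :
    ∫ x in a..b, (y - x) / V x = y * (∫ x in a..b, 1 / V x) - ∫ x in a..b, x / V x := by
  have hid : IntervalIntegrable (fun x => x / V x) volume a b :=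
    intervalIntegrable_div_of_one_div hV continuousOn_id
  rw [← intervalIntegral.integral_const_mul,
    ← intervalIntegral.integral_sub (hV.const_mul y) hid]
  simp only [mul_one_div, sub_div]

end LinearScore

/-- `Y` is the sample space, such as `ℕ` for Poisson counts. -/
theorem wedderburn_only_if_general {M Y : Set ℝ} (hM : M.OrdConnected) (hY : Y.Nontrivial)
    {V : ℝ → ℝ} (hV : ∀ μ ∈ M, V μ ≠ 0)
    {f : ℝ → ℝ → ℝ} (hf : ∀ y ∈ Y, ∀ μ ∈ M, 0 < f y μ)
    (hscore : ∀ y ∈ Y, ∀ μ ∈ M,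
      HasDerivWithinAt (fun μ => Real.log (f y μ)) ((y - μ) / V μ) M μ)
    {a : ℝ} (ha : a ∈ M) {y : ℝ} (hy : y ∈ Y) {μ : ℝ} (hμ : μ ∈ M) :
    f y μ = f y a *
      Real.exp (y * (∫ t in a..μ, 1 / V t) - ∫ t in a..μ, t / V t) := by
  have hsub : uIcc a μ ⊆ M := hM.uIcc_subset ha hμ
  have hderiv : ∀ z ∈ Y, ∀ t ∈ uIcc a μ,
      HasDerivWithinAt (fun μ => Real.log (f z μ)) ((z - t) / V t) (uIcc a μ) t :=
    fun z hz t ht => (hscore z hz t (hsub ht)).mono hsub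
  obtain ⟨u, hu, v, hv, huv⟩ := hY
  have hVint : IntervalIntegrable (fun t => 1 / V t) volume a μ :=
    intervalIntegrable_one_div_of_hasDerivWithinAt_sub_div huv (fun t ht => hV t (hsub ht))
      (hderiv u hu) (hderiv v hv)
  have hscoreInt : IntervalIntegrable (fun t => (y - t) / V t) volume a μ :=
    intervalIntegrable_div_of_one_div hVint (continuousOn_const.sub continuousOn_id)
  rw [← integral_sub_div_eq hVint y]
  exact eq_mul_exp_integral_of_hasDerivWithinAt_log (hf y hy a ha) (hf y hy μ hμ)
    (hderiv y hy) hscoreInt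

/-- The 'only if' direction of Wedderburn's theorem (Theorem 2 of the paper): if a
strictly positive density `f(y, μ)` on an open interval `M` has score function
`∂/∂μ log f(y, μ) = (y − μ)/V(μ)`, then, with `θ(μ) = ∫_a^μ 1/V(t) dt` and
`B(μ) = ∫_a^μ t/V(t) dt`, it has the exponential form
`f(y, μ) = f(y, a)·exp(y·θ(μ) − B(μ))`. -/
theorem wedderburn_only_if (M : Set ℝ) (hMopen : IsOpen M) (hMconn : M.OrdConnected)
    (V : ℝ → ℝ) (hVcont : ContinuousOn V M) (hVpos : ∀ μ ∈ M, 0 < V μ)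
    (f : ℝ → ℝ → ℝ) (hfpos : ∀ (y : ℝ), ∀ μ ∈ M, 0 < f y μ)
    (hscore : ∀ (y : ℝ), ∀ μ ∈ M,
      HasDerivAt (fun μ : ℝ => Real.log (f y μ)) ((y - μ) / V μ) μ)
    (a : ℝ) (ha : a ∈ M) :
    ∀ (y : ℝ), ∀ μ ∈ M,
      f y μ = f y a *
        Real.exp (y * (∫ t in a..μ, 1 / V t) - ∫ t in a..μ, t / V t) :=
  fun y _ hμ => wedderburn_only_if_general hMconn nontrivial_univ
    (fun t ht => (hVpos t ht).ne') (fun z _ => hfpos z)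
    (fun z _ t ht => (hscore z t ht).hasDerivWithinAt) ha (mem_univ y) hμ
end
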